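/- arXiv:1005.3900 — 2 statements merged into one kernel-verified Lean document; each statement's English description precedes it below -/
import Mathlib

section
/- Let (A, φ) be an algebraic probability space and let K_n^T : Aⁿ → ℂ (n ≥ 1) be the unique family of multilinear functionals satisfying φ(X₁⋯Xₙ) = Σ_{π ∈ P(n)} K_π^T(X₁, ..., Xₙ) for all n and all X₁, ..., Xₙ ∈ A, where P(n) is the set of all partitions of {1,...,n} (the tensor cumulants). Let n ≥ 2 and X₁, ..., Xₙ ∈ A, and suppose there exist nonempty disjoint sets I, J with I ∪ J = {1,...,n} and tensor independent subalgebras B₁, B₂ of A such that X_i ∈ B₁ for all i ∈ I and X_j ∈ B₂ for all j ∈ J. Then K_n^T(X₁, ..., Xₙ) = 0. -/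
/-!
For a subset `S` of the indices put `f S = φ(∏→_{i ∈ S} X_i)` and `κ S = K_{|S|}(X_S)`. The
moment–cumulant formula, applied to the increasing enumeration of `S`, says that `f S` is the
sum over all partitions of `S` of the products of `κ` over the blocks (`subMoment_eq_sum`).
Tensor independence says `f S = f (S ∩ I) * f (S ∩ J)` (`subMoment_mul`).

These two facts force `κ S = 0` whenever `S` meets both `I` and `J` (`mixed_eq_zero`), by
induction on `S`: in the partition sum for `f S`, every partition other than `{S}` that has a
mixed block contributes zero, and the partitions without mixed blocks are pairs of a partition
of `S ∩ I` and one of `S ∩ J`, so they contribute `f (S ∩ I) * f (S ∩ J)` (`sum_unmixed`).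
Hence `f S = κ S + f (S ∩ I) * f (S ∩ J) = κ S + f S`. The theorem is the case `S = univ`.
-/

open scoped Classical

/-- `π` is a partition of `{1, …, n}`: its blocks are nonempty and every element lies in
exactly one block. -/
def IsPartition {n : ℕ} (π : Finset (Finset (Fin n))) : Prop :=
  (∀ V ∈ π, V.Nonempty) ∧ ∀ i : Fin n, ∃! V, V ∈ π ∧ i ∈ V

/-- `π` is a non-crossing partition of `{1, …, n}`: there are no `a < b < c < d` with
`a, c` in one block and `b, d` in another block. -/
def IsNonCrossingPartition {n : ℕ} (π : Finset (Finset (Fin n))) : Prop :=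
  IsPartition π ∧ ∀ V ∈ π, ∀ W ∈ π, ∀ a ∈ V, ∀ b ∈ W, ∀ c ∈ V, ∀ d ∈ W,
    a < b → b < c → c < d → V = W

/-- `π` is an interval partition of `{1, …, n}`: a partition all of whose blocks are
intervals. -/
def IsIntervalPartition {n : ℕ} (π : Finset (Finset (Fin n))) : Prop :=
  IsPartition π ∧ ∀ V ∈ π, ∃ a b : Fin n, V = Finset.Icc a b

/-- Given a family `K` of multilinear functionals (`K m` being `(m+1)`-linear, so that
`K_p` for `p ≥ 1` corresponds to `K (p-1)`), the quantity `K_{|W|}(X_W)`, i.e. `K_{|W|}`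
applied to `(X_j)_{j ∈ W}` in increasing order of `j` (junk value `1` if `W = ∅`). -/
noncomputable def blockApply {A : Type*} [AddCommMonoid A] [Module ℂ A]
    (K : ∀ m : ℕ, MultilinearMap ℂ (fun _ : Fin (m + 1) => A) ℂ)
    {n : ℕ} (X : Fin n → A) (W : Finset (Fin n)) : ℂ :=
  if h : W.Nonempty then
    K (W.card - 1) (fun j => X (W.orderIsoOfFin rfl
      ⟨(j : ℕ), by have hj := j.isLt; have hc := Finset.card_pos.mpr h; omega⟩))
  else 1

/-- `K_π(X₁, …, Xₙ) = ∏_{V ∈ π} K_{|V|}(X_V)`. -/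
noncomputable def cumPart {A : Type*} [AddCommMonoid A] [Module ℂ A]
    (K : ∀ m : ℕ, MultilinearMap ℂ (fun _ : Fin (m + 1) => A) ℂ)
    {n : ℕ} (X : Fin n → A) (π : Finset (Finset (Fin n))) : ℂ :=
  ∏ V ∈ π, blockApply K X V

/-- The (not necessarily unital) subalgebras `A₁, A₂` of `A` are tensor independent with
respect to `φ`: for every (nonempty) word `Z₁ ⋯ Zₙ` with letters labeled by `false`
(membership in `A₁`) or `true` (membership in `A₂`),
`φ(Z₁⋯Zₙ) = φ(∏→_{i : λᵢ = 1} Zᵢ) · φ(∏→_{i : λᵢ = 2} Zᵢ)`, the two products being taken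
in the original order. -/
def TensorIndep {A : Type*} [Ring A] [Algebra ℂ A] (φ : A →ₗ[ℂ] ℂ)
    (A₁ A₂ : NonUnitalSubalgebra ℂ A) : Prop :=
  ∀ Z : List (A × Bool), Z ≠ [] →
    (∀ p ∈ Z, if p.2 then p.1 ∈ A₂ else p.1 ∈ A₁) →
    φ ((Z.map Prod.fst).prod) =
      φ (((Z.filter (fun p => p.2 = false)).map Prod.fst).prod) *
        φ (((Z.filter (fun p => p.2 = true)).map Prod.fst).prod)

/-! ### Partitions of a subset -/

/-- `π` is a partition of the subset `S` of the index type. For `S = univ` in `Fin n` this is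
`IsPartition`. -/
def PartOn {ι : Type*} (S : Finset ι) (π : Finset (Finset ι)) : Prop :=
  (∀ V ∈ π, V.Nonempty ∧ V ⊆ S) ∧ ∀ i ∈ S, ∃! V, V ∈ π ∧ i ∈ V

theorem partOn_empty_iff {ι : Type*} (π : Finset (Finset ι)) :
    PartOn (∅ : Finset ι) π ↔ π = ∅ := by
  constructor
  · rintro ⟨h, -⟩
    refine Finset.eq_empty_of_forall_notMem fun V hV => ?_
    obtain ⟨⟨x, hx⟩, h2⟩ := h V hV
    exact absurd (h2 hx) (by simp)
  · rintro rfl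
    constructor <;> simp

theorem PartOn.singleton {ι : Type*} {S : Finset ι} (hS : S.Nonempty) :
    PartOn S {S} := by
  refine ⟨by simpa using hS, fun i hi => ⟨S, by simpa using hi, ?_⟩⟩
  rintro V ⟨hV, -⟩
  simpa using hV

theorem PartOn.eq_singleton {ι : Type*} {S : Finset ι} {π : Finset (Finset ι)}
    (h : PartOn S π) (hS : S ∈ π) : π = {S} := by
  refine Finset.eq_singleton_iff_unique_mem.mpr ⟨hS, fun V hV => ?_⟩
  obtain ⟨⟨x, hx⟩, h2⟩ := h.1 V hV
  exact (h.2 x (h2 hx)).unique ⟨hV, hx⟩ ⟨hS, h2 hx⟩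

theorem PartOn.union {ι : Type*} [DecidableEq ι] {S T : Finset ι} {π σ : Finset (Finset ι)}
    (hST : Disjoint S T) (h : PartOn S π) (h' : PartOn T σ) : PartOn (S ∪ T) (π ∪ σ) := by
  have key : ∀ {S T : Finset ι} {π σ : Finset (Finset ι)}, Disjoint S T → PartOn S π →
      PartOn T σ → ∀ i ∈ S, ∃! V, V ∈ π ∪ σ ∧ i ∈ V := by
    intro S T π σ hST h h' i hi
    obtain ⟨V, ⟨hV, hiV⟩, hu⟩ := h.2 i hi
    refine ⟨V, ⟨Finset.mem_union_left _ hV, hiV⟩, ?_⟩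
    rintro W ⟨hW, hiW⟩
    rcases Finset.mem_union.mp hW with hW | hW
    · exact hu W ⟨hW, hiW⟩
    · exact absurd ((h'.1 W hW).2 hiW) (Finset.disjoint_left.mp hST hi)
  constructor
  · intro V hV
    rcases Finset.mem_union.mp hV with hV | hV
    · exact ⟨(h.1 V hV).1, (h.1 V hV).2.trans Finset.subset_union_left⟩
    · exact ⟨(h'.1 V hV).1, (h'.1 V hV).2.trans Finset.subset_union_right⟩
  · intro i hi
    rcases Finset.mem_union.mp hi with hi | hi
    · exact key hST h h' i hi
    · rw [Finset.union_comm]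
      exact key hST.symm h' h i hi

/-- If every block of a partition of `S` lies in one of the disjoint sets `I` and `J`, then the
blocks inside `I` partition `S ∩ I`. -/
theorem PartOn.restrict {ι : Type*} [DecidableEq ι] {S I J : Finset ι} {π : Finset (Finset ι)}
    (hIJ : Disjoint I J) (h : PartOn S π) (hp : ∀ V ∈ π, V ⊆ I ∨ V ⊆ J) :
    PartOn (S ∩ I) (π.filter (· ⊆ I)) := by
  constructor
  · intro V hV
    obtain ⟨hV, hVI⟩ := Finset.mem_filter.mp hV
    exact ⟨(h.1 V hV).1, Finset.subset_inter (h.1 V hV).2 hVI⟩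
  · intro i hi
    obtain ⟨hiS, hiI⟩ := Finset.mem_inter.mp hi
    obtain ⟨V, ⟨hV, hiV⟩, hu⟩ := h.2 i hiS
    refine ⟨V, ⟨Finset.mem_filter.mpr ⟨hV, ?_⟩, hiV⟩, ?_⟩
    · refine (hp V hV).resolve_right fun hVJ => ?_
      exact Finset.disjoint_left.mp hIJ hiI (hVJ hiV)
    · rintro W ⟨hW, hiW⟩
      exact hu W ⟨(Finset.mem_filter.mp hW).1, hiW⟩

/-- No block of a partition of a subset of `J` lies in a set `I` disjoint from `J`. -/
theorem PartOn.filter_eq_empty {ι : Type*} [DecidableEq ι] {S I J : Finset ι} {π : Finset (Finset ι)}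
    (hIJ : Disjoint I J) (h : PartOn (S ∩ J) π) : π.filter (· ⊆ I) = ∅ := by
  refine Finset.filter_eq_empty_iff.mpr fun V hV hVI => ?_
  obtain ⟨⟨x, hx⟩, h2⟩ := h.1 V hV
  exact Finset.disjoint_left.mp hIJ (hVI hx) (Finset.mem_inter.mp (h2 hx)).2

theorem PartOn.filter_eq_self {ι : Type*} [DecidableEq ι] {S I : Finset ι} {π : Finset (Finset ι)}
    (h : PartOn (S ∩ I) π) : π.filter (· ⊆ I) = π :=
  Finset.filter_eq_self.mpr fun V hV => (h.1 V hV).2.trans Finset.inter_subset_right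

/-! ### Vanishing of mixed values from multiplicativity -/

/-- Partitions of `S` all of whose blocks lie in `I` or in `J` are pairs of a partition of
`S ∩ I` and a partition of `S ∩ J`, so the sum of the weights factorizes. -/
theorem sum_unmixed {ι : Type*} [Fintype ι] [DecidableEq ι] (κ : Finset ι → ℂ) {I J : Finset ι}
    (hIJ : Disjoint I J) (hu : I ∪ J = Finset.univ) (S : Finset ι) :
    ∑ π ∈ Finset.univ.filter
        (fun π : Finset (Finset ι) => PartOn S π ∧ ∀ V ∈ π, V ⊆ I ∨ V ⊆ J), ∏ V ∈ π, κ V =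
      (∑ π ∈ Finset.univ.filter (PartOn (S ∩ I)), ∏ V ∈ π, κ V) *
        ∑ π ∈ Finset.univ.filter (PartOn (S ∩ J)), ∏ V ∈ π, κ V := by
  have hS : S ∩ I ∪ S ∩ J = S := by rw [← Finset.inter_union_distrib_left, hu, Finset.inter_univ]
  have hd : Disjoint (S ∩ I) (S ∩ J) :=
    hIJ.mono Finset.inter_subset_right Finset.inter_subset_right
  rw [Finset.sum_mul_sum, ← Finset.sum_product']
  refine Finset.sum_nbij' (fun π => (π.filter (· ⊆ I), π.filter (· ⊆ J)))
    (fun p => p.1 ∪ p.2) ?_ ?_ ?_ ?_ ?_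
  · intro π hπ
    simp only [Finset.mem_filter, Finset.mem_univ, true_and, Finset.mem_product] at hπ ⊢
    exact ⟨hπ.1.restrict hIJ hπ.2, hπ.1.restrict hIJ.symm fun V hV => (hπ.2 V hV).symm⟩
  · rintro ⟨π, σ⟩ hp
    simp only [Finset.mem_filter, Finset.mem_univ, true_and, Finset.mem_product] at hp ⊢
    refine ⟨?_, fun V hV => ?_⟩
    · have := PartOn.union hd hp.1 hp.2
      rwa [hS] at this
    · rcases Finset.mem_union.mp hV with hV | hV
      · exact Or.inl ((hp.1.1 V hV).2.trans Finset.inter_subset_right)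
      · exact Or.inr ((hp.2.1 V hV).2.trans Finset.inter_subset_right)
  · intro π hπ
    simp only [Finset.mem_filter, Finset.mem_univ, true_and] at hπ
    show π.filter (· ⊆ I) ∪ π.filter (· ⊆ J) = π
    rw [← Finset.filter_or]
    exact Finset.filter_eq_self.mpr hπ.2
  · rintro ⟨π, σ⟩ hp
    simp only [Finset.mem_filter, Finset.mem_univ, true_and, Finset.mem_product] at hp
    simp only [Finset.filter_union, hp.1.filter_eq_self, hp.2.filter_eq_self,
      hp.1.filter_eq_empty hIJ.symm, hp.2.filter_eq_empty hIJ, Finset.union_empty,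
      Finset.empty_union]
  · intro π hπ
    simp only [Finset.mem_filter, Finset.mem_univ, true_and] at hπ
    show ∏ V ∈ π, κ V = (∏ V ∈ π.filter (· ⊆ I), κ V) * ∏ V ∈ π.filter (· ⊆ J), κ V
    rw [← Finset.prod_union]
    · rw [← Finset.filter_or, Finset.filter_eq_self.mpr hπ.2]
    · refine Finset.disjoint_left.mpr fun V hV hV' => ?_
      obtain ⟨hVπ, hVI⟩ := Finset.mem_filter.mp hV
      obtain ⟨x, hx⟩ := (hπ.1.1 V hVπ).1
      exact Finset.disjoint_left.mp hIJ (hVI hx) ((Finset.mem_filter.mp hV').2 hx)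

/-- The combinatorial heart: a set function `κ` whose partition sums `f` are multiplicative
with respect to `I` and `J` vanishes on every set meeting both `I` and `J`. -/
theorem mixed_eq_zero {ι : Type*} [Fintype ι] [DecidableEq ι] (f κ : Finset ι → ℂ) {I J : Finset ι}
    (hIJ : Disjoint I J) (hu : I ∪ J = Finset.univ)
    (hf : ∀ S, f S = ∑ π ∈ Finset.univ.filter (PartOn S), ∏ V ∈ π, κ V)
    (hmul : ∀ S, f S = f (S ∩ I) * f (S ∩ J)) (S : Finset ι)
    (hSI : ¬ S ⊆ I) (hSJ : ¬ S ⊆ J) : κ S = 0 := by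
  induction S using Finset.strongInduction with
  | H S ih =>
    have hne : S.Nonempty := by
      rw [Finset.nonempty_iff_ne_empty]
      rintro rfl
      simp at hSI
    have h1 : f S = κ S + ∑ π ∈ Finset.univ.filter
        (fun π : Finset (Finset ι) => PartOn S π ∧ ∀ V ∈ π, V ⊆ I ∨ V ⊆ J), ∏ V ∈ π, κ V := by
      rw [hf S, ← Finset.add_sum_erase _ _
        (Finset.mem_filter.mpr ⟨Finset.mem_univ _, PartOn.singleton hne⟩),
        Finset.prod_singleton]
      congr 1
      symm
      apply Finset.sum_subset
      · intro π hπ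
        simp only [Finset.mem_filter, Finset.mem_univ, true_and, Finset.mem_erase] at hπ ⊢
        refine ⟨?_, hπ.1⟩
        rintro rfl
        rcases hπ.2 S (Finset.mem_singleton_self S) with h | h
        · exact hSI h
        · exact hSJ h
      · -- a partition other than `{S}` with a mixed block contributes zero by induction
        intro π hπ hπ'
        simp only [Finset.mem_filter, Finset.mem_univ, true_and, Finset.mem_erase] at hπ hπ'
        have : ∃ V ∈ π, ¬ V ⊆ I ∧ ¬ V ⊆ J := by
          by_contra hcon
          push Not at hcon
          exact hπ' ⟨hπ.2, fun V hV => or_iff_not_imp_left.mpr (hcon V hV)⟩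
        obtain ⟨V, hV, hVI, hVJ⟩ := this
        refine Finset.prod_eq_zero hV (ih V ?_ hVI hVJ)
        refine (hπ.2.1 V hV).2.ssubset_of_ne ?_
        rintro rfl
        exact hπ.1 (hπ.2.eq_singleton hV)
    rw [sum_unmixed κ hIJ hu, ← hf, ← hf, ← hmul] at h1
    simpa using h1

/-! ### Cumulants and moments of subfamilies -/

/-- `K_{|W|}(X_W)` may be computed along any increasing enumeration `g` of `W`. -/
theorem blockApply_eq {A : Type*} [AddCommMonoid A] [Module ℂ A]
    (K : ∀ m : ℕ, MultilinearMap ℂ (fun _ : Fin (m + 1) => A) ℂ)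
    {n k : ℕ} (X : Fin n → A) (W : Finset (Fin n)) (g : Fin (k + 1) ↪o Fin n)
    (hg : Finset.univ.map g.toEmbedding = W) :
    blockApply K X W = K k (fun j => X (g j)) := by
  have hcard : W.card = k + 1 := by rw [← hg]; simp
  have hne : W.Nonempty := Finset.card_pos.mp (by omega)
  have hcongr : ∀ (p q : ℕ) (h : p = q) (Y : Fin (p + 1) → A) (Y' : Fin (q + 1) → A),
      (∀ j, Y j = Y' (Fin.cast (by omega) j)) → K p Y = K q Y' := by
    rintro p q rfl Y Y' h
    congr 1
    funext j
    exact h j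
  rw [blockApply, dif_pos hne]
  refine hcongr _ _ (by omega) _ _ fun j => ?_
  have huniq : (g : Fin (k + 1) → Fin n) = W.orderEmbOfFin hcard :=
    Finset.orderEmbOfFin_unique hcard
      (fun x => by rw [← hg]; exact Finset.mem_map_of_mem _ (Finset.mem_univ x)) g.strictMono
  simp only [huniq, Finset.coe_orderIsoOfFin_apply]
  congr 1

/-- Relabelling the variables along an increasing map relabels the blocks. -/
theorem blockApply_map {A : Type*} [AddCommMonoid A] [Module ℂ A]
    (K : ∀ m : ℕ, MultilinearMap ℂ (fun _ : Fin (m + 1) => A) ℂ)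
    {m n : ℕ} (X : Fin n → A) (e : Fin m ↪o Fin n) (W : Finset (Fin m)) :
    blockApply K (fun i => X (e i)) W = blockApply K X (W.map e.toEmbedding) := by
  rcases W.eq_empty_or_nonempty with rfl | hW
  · simp [blockApply]
  · obtain ⟨k, hk⟩ : ∃ k, W.card = k + 1 := ⟨W.card - 1, by have := hW.card_pos; omega⟩
    have hg : Finset.univ.map (W.orderEmbOfFin hk).toEmbedding = W := by
      apply Finset.coe_injective
      simp
    rw [blockApply_eq K _ W (W.orderEmbOfFin hk) hg,
      blockApply_eq K X _ ((W.orderEmbOfFin hk).trans e)]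
    · rfl
    · conv_rhs => rw [← hg, Finset.map_map]
      rfl

/-- The moment `φ(∏→_{i ∈ S} X_i)`, the product being taken in increasing order of `i`;
it is `φ 1` for `S = ∅`. -/
noncomputable def subMoment {A : Type*} [Ring A] [Algebra ℂ A] (φ : A →ₗ[ℂ] ℂ) {n : ℕ}
    (X : Fin n → A) (S : Finset (Fin n)) : ℂ :=
  φ ((((List.finRange n).filter (fun i => i ∈ S)).map X).prod)

theorem filter_finRange_eq_ofFn {n k : ℕ} (S : Finset (Fin n)) (h : S.card = k) :
    (List.finRange n).filter (fun i => i ∈ S) = List.ofFn (S.orderEmbOfFin h) := by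
  apply List.Pairwise.eq_of_mem_iff (r := (· < ·))
  · exact (List.pairwise_lt_finRange n).filter _
  · exact List.pairwise_ofFn.mpr fun i j hij => (S.orderEmbOfFin h).strictMono hij
  · intro a
    have := congrArg (a ∈ ·) (Finset.range_orderEmbOfFin S h)
    simp only [Set.mem_range, Finset.mem_coe, eq_iff_iff] at this
    simp [List.mem_ofFn, this]

/-- The moment–cumulant formula for the subfamily `(X_i)_{i ∈ S}`, with all partitions
regarded as partitions of the subset `S`. -/
theorem subMoment_eq_sum {A : Type*} [Ring A] [Algebra ℂ A]
    (φ : A →ₗ[ℂ] ℂ) (hφ : φ 1 = 1)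
    (K : ∀ m : ℕ, MultilinearMap ℂ (fun _ : Fin (m + 1) => A) ℂ)
    (hK : ∀ (m : ℕ) (Y : Fin (m + 1) → A),
      φ ((List.ofFn Y).prod) =
        ∑ π ∈ Finset.univ.filter
            (fun π : Finset (Finset (Fin (m + 1))) => IsPartition π),
          cumPart K Y π)
    {n : ℕ} (X : Fin n → A) (S : Finset (Fin n)) :
    subMoment φ X S = ∑ π ∈ Finset.univ.filter (PartOn S), ∏ V ∈ π, blockApply K X V := by
  rcases S.eq_empty_or_nonempty with rfl | hS
  · simp [subMoment, hφ, partOn_empty_iff, Finset.filter_eq']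
  obtain ⟨m, hm⟩ : ∃ m, S.card = m + 1 := ⟨S.card - 1, by have := hS.card_pos; omega⟩
  set e := S.orderEmbOfFin hm with he
  have heS : ∀ i, e i ∈ S := fun i => Finset.orderEmbOfFin_mem S hm i
  have hsurj : ∀ i ∈ S, ∃ j, e j = i := fun i hi => by
    have : i ∈ Set.range e := by rw [he, Finset.range_orderEmbOfFin]; exact hi
    exact this
  rw [subMoment, filter_finRange_eq_ofFn S hm, List.map_ofFn, hK]
  -- transport partitions of `Fin (m + 1)` along the increasing enumeration `e` of `S`
  refine Finset.sum_bij
    (fun π _ => π.map (Finset.mapEmbedding e.toEmbedding).toEmbedding) ?_ ?_ ?_ ?_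
  · intro π hπ
    simp only [Finset.mem_filter, Finset.mem_univ, true_and] at hπ ⊢
    constructor
    · intro V hV
      obtain ⟨W, hW, rfl⟩ := Finset.mem_map.mp hV
      refine ⟨(hπ.1 W hW).map, fun i hi => ?_⟩
      obtain ⟨j, -, rfl⟩ := Finset.mem_map.mp hi
      exact heS j
    · intro i hi
      obtain ⟨j, rfl⟩ := hsurj i hi
      obtain ⟨W, ⟨hW, hjW⟩, hu⟩ := hπ.2 j
      refine ⟨W.map e.toEmbedding, ⟨Finset.mem_map_of_mem _ hW,
        Finset.mem_map_of_mem e.toEmbedding hjW⟩, ?_⟩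
      rintro V ⟨hV, hjV⟩
      obtain ⟨W', hW', rfl⟩ := Finset.mem_map.mp hV
      have hj : j ∈ W' := by
        obtain ⟨j', hj', hjj⟩ := Finset.mem_map.mp hjV
        rwa [← e.injective hjj]
      rw [hu W' ⟨hW', hj⟩]
      rfl
  · intro π _ σ _ h
    exact Finset.map_injective _ h
  · intro π hπ
    simp only [Finset.mem_filter, Finset.mem_univ, true_and] at hπ
    have hmap : ∀ V ∈ π, (Finset.univ.filter (fun j => e j ∈ V)).map e.toEmbedding = V := by
      intro V hV
      ext i
      simp only [Finset.mem_map, Finset.mem_filter, Finset.mem_univ, true_and]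
      constructor
      · rintro ⟨j, hj, rfl⟩
        exact hj
      · intro hi
        obtain ⟨j, rfl⟩ := hsurj i ((hπ.1 V hV).2 hi)
        exact ⟨j, hi, rfl⟩
    refine ⟨Finset.univ.filter (fun W => W.map e.toEmbedding ∈ π), ?_, ?_⟩
    · simp only [Finset.mem_filter, Finset.mem_univ, true_and]
      constructor
      · intro W hW
        exact Finset.map_nonempty.mp (hπ.1 _ (Finset.mem_filter.mp hW).2).1
      · intro j
        obtain ⟨V, ⟨hV, hjV⟩, hu⟩ := hπ.2 (e j) (heS j)
        refine ⟨Finset.univ.filter (fun j => e j ∈ V), ⟨?_, by simpa using hjV⟩, ?_⟩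
        · simpa [hmap V hV] using hV
        · rintro W ⟨hW, hjW⟩
          have := hu _ ⟨(Finset.mem_filter.mp hW).2, Finset.mem_map_of_mem e.toEmbedding hjW⟩
          apply Finset.map_injective e.toEmbedding
          rw [hmap V hV, this]
    · ext V
      simp only [Finset.mem_map, Finset.mem_filter, Finset.mem_univ, true_and]
      constructor
      · rintro ⟨W, hW, rfl⟩
        exact hW
      · intro hV
        exact ⟨_, by rw [hmap V hV]; exact hV, hmap V hV⟩
  · intro π _
    rw [cumPart, Finset.prod_map]
    exact Finset.prod_congr rfl fun W _ => blockApply_map K X e W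

/-- Tensor independence, read on the moments of subfamilies. -/
theorem subMoment_mul {A : Type*} [Ring A] [Algebra ℂ A]
    (φ : A →ₗ[ℂ] ℂ) (hφ : φ 1 = 1) {n : ℕ} (X : Fin n → A) (I J : Finset (Fin n))
    (hIJ : Disjoint I J) (hIJu : I ∪ J = Finset.univ)
    (B₁ B₂ : NonUnitalSubalgebra ℂ A) (htens : TensorIndep φ B₁ B₂)
    (hXI : ∀ i ∈ I, X i ∈ B₁) (hXJ : ∀ j ∈ J, X j ∈ B₂) (S : Finset (Fin n)) :
    subMoment φ X S = subMoment φ X (S ∩ I) * subMoment φ X (S ∩ J) := by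
  have hI : ∀ i, i ∈ I ↔ i ∉ J := fun i => by
    refine ⟨fun h => Finset.disjoint_left.mp hIJ h, fun h => ?_⟩
    have : i ∈ I ∪ J := hIJu ▸ Finset.mem_univ i
    exact (Finset.mem_union.mp this).resolve_right h
  rcases S.eq_empty_or_nonempty with rfl | ⟨x, hx⟩
  · simp [subMoment, hφ]
  -- the word `∏→_{i ∈ S} X_i`, the letter `X_i` being labelled by whether `i ∈ J`
  have h := htens (((List.finRange n).filter (fun i => i ∈ S)).map
    (fun i => (X i, decide (i ∈ J)))) ?_ ?_
  · simp only [List.map_map, List.filter_map, List.filter_filter] at h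
    simp only [subMoment]
    have e₁ : (fun i => decide (i ∈ S ∩ I)) = fun a => ((fun p : A × Bool =>
        decide (p.2 = false)) ∘ fun i => (X i, decide (i ∈ J))) a && decide (a ∈ S) := by
      funext i
      by_cases h1 : i ∈ S <;> by_cases h2 : i ∈ J <;> simp [hI, h1, h2]
    have e₂ : (fun i => decide (i ∈ S ∩ J)) = fun a => ((fun p : A × Bool =>
        decide (p.2 = true)) ∘ fun i => (X i, decide (i ∈ J))) a && decide (a ∈ S) := by
      funext i
      by_cases h1 : i ∈ S <;> by_cases h2 : i ∈ J <;> simp [h1, h2]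
    rw [e₁, e₂]
    exact h
  · intro h0
    have : x ∈ (List.finRange n).filter (fun i => i ∈ S) := by simpa using hx
    rw [List.map_eq_nil_iff.mp h0] at this
    simp at this
  · intro p hp
    obtain ⟨i, -, rfl⟩ := List.mem_map.mp hp
    by_cases hi : i ∈ J
    · simpa [hi] using hXJ i hi
    · simpa [hi] using hXI i ((hI i).mpr hi)

/-- Mixed tensor cumulants of tensor independent random variables vanish: if `K` is the
family of tensor cumulants of `(A, φ)` (i.e. it satisfies the tensor moment–cumulant
formula) and `X₁, …, Xₙ` (`n ≥ 2`) split into two nonempty groups, indexed by `I` and `J`,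
lying in tensor independent subalgebras `B₁` resp. `B₂`, then `K_n^T(X₁, …, Xₙ) = 0`. -/
theorem tensor_mixed_cumulant_vanish {A : Type*} [Ring A] [Algebra ℂ A]
    (φ : A →ₗ[ℂ] ℂ) (hφ : φ 1 = 1)
    (K : ∀ m : ℕ, MultilinearMap ℂ (fun _ : Fin (m + 1) => A) ℂ)
    (hK : ∀ (m : ℕ) (Y : Fin (m + 1) → A),
      φ ((List.ofFn Y).prod) =
        ∑ π ∈ Finset.univ.filter
            (fun π : Finset (Finset (Fin (m + 1))) => IsPartition π),
          cumPart K Y π)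
    {n : ℕ} (hn : 2 ≤ n) (X : Fin n → A)
    (I J : Finset (Fin n)) (hI : I.Nonempty) (hJ : J.Nonempty)
    (hIJ : Disjoint I J) (hIJu : I ∪ J = Finset.univ)
    (B₁ B₂ : NonUnitalSubalgebra ℂ A) (htens : TensorIndep φ B₁ B₂)
    (hXI : ∀ i ∈ I, X i ∈ B₁) (hXJ : ∀ j ∈ J, X j ∈ B₂) :
    K (n - 1) (fun j => X (Fin.cast (by omega) j)) = 0 := by
  have hdis := Finset.disjoint_left.mp hIJ
  have h0 : blockApply K X Finset.univ = 0 := by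
    refine mixed_eq_zero (subMoment φ X) (blockApply K X) hIJ hIJu
      (subMoment_eq_sum φ hφ K hK X) (subMoment_mul φ hφ X I J hIJ hIJu B₁ B₂ htens hXI hXJ)
      Finset.univ ?_ ?_
    · obtain ⟨j, hj⟩ := hJ
      exact fun h => hdis (h (Finset.mem_univ j)) hj
    · obtain ⟨i, hi⟩ := hI
      exact fun h => hdis hi (h (Finset.mem_univ i))
  rw [← h0]
  refine (blockApply_eq K X Finset.univ
    (Fin.castOrderIso (show n - 1 + 1 = n by omega)).toOrderEmbedding ?_).symm
  ext i
  simp only [Finset.mem_map, Finset.mem_univ, true_and, iff_true]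
  exact ⟨Fin.cast (by omega) i, rfl⟩
end

section
/- Let (A, φ) be an algebraic probability space. Then there exists a unique family of multilinear functionals K_n^B : Aⁿ → ℂ (n ≥ 1) such that for every n ≥ 1 and all X₁, ..., Xₙ ∈ A, φ(X₁⋯Xₙ) = Σ_{π ∈ I(n)} K_π^B(X₁, ..., Xₙ) (the Boolean moment–cumulant formula). -/
/-!
The formula is a triangular system. A partition of an `(n+1)`-element set other than the
one-block partition has only blocks of size at most `n`
(`IsPartition.card_lt_of_ne_singleton_univ`), and the one-block partition contributes exactly
`K n X` (`cumPart_singleton_univ`). The formula at level `n` therefore reads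
`φ (X₀ ⋯ Xₙ) = K n X + (a term depending only on the K m with m < n)`, which determines `K`
recursively and gives uniqueness. For existence the remaining term must be multilinear in `X`:
each index lies in exactly one block of a partition `π`, so `cumPart K X π` depends linearly on
each argument through a single factor (`cumPartMultilinear`). Of the interval condition, only
the fact that the one-block partition is an interval partition matters.
-/

open scoped Classical

section Block

variable {A : Type*} [AddCommMonoid A] [Module ℂ A]
  (K : ∀ m : ℕ, MultilinearMap ℂ (fun _ : Fin (m + 1) => A) ℂ) {n : ℕ}

theorem blockApply_update_of_notMem (X : Fin n → A) (W : Finset (Fin n)) {i : Fin n}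
    (hi : i ∉ W) (x : A) :
    blockApply K (Function.update X i x) W = blockApply K X W := by
  unfold blockApply
  split_ifs with h
  · congr 1
    funext j
    apply Function.update_of_ne
    rintro rfl
    exact hi (Subtype.property _)
  · rfl

/-- The factor of a block containing `i` is an updated argument of `K`, at the position of `i`
in the block; linearity of the factor in the `i`-th variable follows. -/
theorem exists_blockApply_update (X : Fin n → A) (W : Finset (Fin n)) {i : Fin n}
    (hi : i ∈ W) :
    ∃ (Y : Fin (W.card - 1 + 1) → A) (k : Fin (W.card - 1 + 1)),
      ∀ x, blockApply K (Function.update X i x) W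
        = K (W.card - 1) (Function.update Y k x) := by
  have h : W.Nonempty := ⟨i, hi⟩
  have hc : W.card - 1 + 1 = W.card := Nat.sub_add_cancel (Finset.card_pos.mpr h)
  let e := W.orderIsoOfFin rfl
  refine ⟨fun j => X (e (Fin.cast hc j)), Fin.cast hc.symm (e.symm ⟨i, hi⟩), fun x => ?_⟩
  unfold blockApply
  rw [dif_pos h]
  congr 1
  funext j
  change Function.update X i x (e (Fin.cast hc j)) = _
  by_cases hj : j = Fin.cast hc.symm (e.symm ⟨i, hi⟩)
  · subst hj
    simp
  · rw [Function.update_of_ne hj, Function.update_of_ne]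
    intro h'
    apply hj
    have : e (Fin.cast hc j) = ⟨i, hi⟩ := Subtype.ext h'
    rw [← this]
    simp

/-- Updating the `i`-th variable only affects the factor of the block `V` containing `i`. -/
theorem cumPart_update {π : Finset (Finset (Fin n))} (hπ : IsPartition π) (X : Fin n → A)
    {i : Fin n} {V : Finset (Fin n)} (hV : V ∈ π) (hi : i ∈ V) (x : A) :
    cumPart K (Function.update X i x) π
      = blockApply K (Function.update X i x) V * ∏ W ∈ π.erase V, blockApply K X W := by
  unfold cumPart
  rw [← Finset.mul_prod_erase _ _ hV]
  congr 1
  refine Finset.prod_congr rfl fun W hW => ?_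
  rw [Finset.mem_erase] at hW
  exact blockApply_update_of_notMem K X W
    (fun hiW => hW.1 ((hπ.2 i).unique ⟨hW.2, hiW⟩ ⟨hV, hi⟩)) x

/-- For a partition `π`, the functional `X ↦ K_π(X)` as a multilinear map. -/
noncomputable def cumPartMultilinear {π : Finset (Finset (Fin n))} (hπ : IsPartition π) :
    MultilinearMap ℂ (fun _ : Fin n => A) ℂ where
  toFun X := cumPart K X π
  map_update_add' {inst} X i x y := by
    obtain rfl : inst = instDecidableEqFin n := Subsingleton.elim _ _
    obtain ⟨V, ⟨hV, hi⟩, -⟩ := hπ.2 i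
    obtain ⟨Y, k, hY⟩ := exists_blockApply_update K X V hi
    have key := fun x => cumPart_update K hπ X hV hi x
    simp only [key, hY, MultilinearMap.map_update_add, add_mul]
  map_update_smul' {inst} X i c x := by
    obtain rfl : inst = instDecidableEqFin n := Subsingleton.elim _ _
    obtain ⟨V, ⟨hV, hi⟩, -⟩ := hπ.2 i
    obtain ⟨Y, k, hY⟩ := exists_blockApply_update K X V hi
    have key := fun x => cumPart_update K hπ X hV hi x
    simp only [key, hY, MultilinearMap.map_update_smul, smul_eq_mul, mul_assoc]

theorem cumPart_congr {K K' : ∀ m : ℕ, MultilinearMap ℂ (fun _ : Fin (m + 1) => A) ℂ}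
    (X : Fin n → A) (π : Finset (Finset (Fin n)))
    (h : ∀ V ∈ π, K (V.card - 1) = K' (V.card - 1)) :
    cumPart K X π = cumPart K' X π := by
  refine Finset.prod_congr rfl fun V hV => ?_
  simp only [blockApply, h V hV]

/-- The index `m` is kept free: for a block of `m + 1` elements enumerated increasingly by `f`,
the factor is `K m (X ∘ f)`. -/
theorem blockApply_eq_of_card (X : Fin n → A) (W : Finset (Fin n)) (m : ℕ)
    (hm : W.card = m + 1) :
    blockApply K X W = K m (fun j => X (W.orderEmbOfFin hm j)) := by
  have h : W.Nonempty := Finset.card_pos.mp (by omega)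
  obtain rfl : m = W.card - 1 := by omega
  unfold blockApply
  rw [dif_pos h]
  congr 1

theorem cumPart_singleton_univ (X : Fin (n + 1) → A) :
    cumPart K X {Finset.univ} = K n X := by
  rw [cumPart, Finset.prod_singleton, blockApply_eq_of_card K X _ n (Finset.card_fin _)]
  congr 1
  funext j
  have : (Finset.univ : Finset (Fin (n + 1))).orderEmbOfFin (Finset.card_fin _)
      = RelEmbedding.refl _ :=
    (Finset.orderEmbOfFin_unique' _ (fun x => Finset.mem_univ _)).symm
  rw [this]
  rfl

end Block

theorem IsPartition.card_lt_of_ne_singleton_univ {n : ℕ} {π : Finset (Finset (Fin n))}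
    (hπ : IsPartition π) (hne : π ≠ {Finset.univ}) {V : Finset (Fin n)} (hV : V ∈ π) :
    V.card < n := by
  by_contra hlt
  have hu : V = Finset.univ := by
    apply Finset.eq_univ_of_card
    have := Finset.card_le_univ V
    simp only [Fintype.card_fin] at this ⊢
    omega
  subst hu
  apply hne
  refine Finset.eq_singleton_iff_unique_mem.mpr ⟨hV, fun W hW => ?_⟩
  obtain ⟨i, hi⟩ := hπ.1 W hW
  exact (hπ.2 i).unique ⟨hW, hi⟩ ⟨hV, Finset.mem_univ i⟩

theorem isIntervalPartition_singleton_univ (n : ℕ) :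
    IsIntervalPartition ({Finset.univ} : Finset (Finset (Fin (n + 1)))) := by
  refine ⟨⟨by simp, fun i => ⟨Finset.univ, by simp, by simp⟩⟩, ?_⟩
  intro V hV
  refine ⟨0, Fin.last n, ?_⟩
  rw [Finset.mem_singleton.mp hV]
  ext i
  simp [Fin.le_last]

/-- The interval partitions of `{0, …, n}` with more than one block. -/
noncomputable def properIntervalPartitions (n : ℕ) : Finset (Finset (Finset (Fin (n + 1)))) :=
  (Finset.univ.filter (fun π : Finset (Finset (Fin (n + 1))) => IsIntervalPartition π)).erase
    {Finset.univ}

theorem isPartition_of_mem_properIntervalPartitions {n : ℕ}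
    {π : Finset (Finset (Fin (n + 1)))} (h : π ∈ properIntervalPartitions n) :
    IsPartition π := by
  simp only [properIntervalPartitions, Finset.mem_erase, Finset.mem_filter] at h
  exact h.2.2.1

section Recursion

variable {A : Type*} [AddCommMonoid A] [Module ℂ A]

/-- Triangularity: the sum over interval partitions is `K n X` plus terms of lower order. -/
theorem sum_cumPart_eq (K : ∀ m : ℕ, MultilinearMap ℂ (fun _ : Fin (m + 1) => A) ℂ)
    (n : ℕ) (X : Fin (n + 1) → A) :
    ∑ π ∈ Finset.univ.filter
        (fun π : Finset (Finset (Fin (n + 1))) => IsIntervalPartition π), cumPart K X π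
      = K n X + ∑ π ∈ properIntervalPartitions n, cumPart K X π := by
  have hmem : ({Finset.univ} : Finset (Finset (Fin (n + 1)))) ∈ Finset.univ.filter
      (fun π : Finset (Finset (Fin (n + 1))) => IsIntervalPartition π) :=
    Finset.mem_filter.mpr ⟨Finset.mem_univ _, isIntervalPartition_singleton_univ n⟩
  rw [← Finset.add_sum_erase _ _ hmem, cumPart_singleton_univ]
  rfl

theorem sum_properIntervalPartitions_congr
    {K K' : ∀ m : ℕ, MultilinearMap ℂ (fun _ : Fin (m + 1) => A) ℂ} (n : ℕ)
    (h : ∀ m < n, K m = K' m) (X : Fin (n + 1) → A) :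
    ∑ π ∈ properIntervalPartitions n, cumPart K X π
      = ∑ π ∈ properIntervalPartitions n, cumPart K' X π := by
  refine Finset.sum_congr rfl fun π hπ => cumPart_congr X π fun V hV => h _ ?_
  have hp := isPartition_of_mem_properIntervalPartitions hπ
  have hpos := Finset.card_pos.mpr (hp.1 V hV)
  have hlt := hp.card_lt_of_ne_singleton_univ (Finset.ne_of_mem_erase hπ) hV
  omega

/-- The Boolean cumulants attached to a sequence `M` of multilinear moments, obtained by solving
the moment–cumulant formula for its top-order term. Cumulants of order at least `n` are replaced
by `0` in the correction term, where they do not occur. -/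
noncomputable def booleanCumulant
    (M : ∀ m : ℕ, MultilinearMap ℂ (fun _ : Fin (m + 1) => A) ℂ) :
    ∀ n : ℕ, MultilinearMap ℂ (fun _ : Fin (n + 1) => A) ℂ
  | n => M n - ∑ π : {π // π ∈ properIntervalPartitions n},
      cumPartMultilinear (fun m => if _h : m < n then booleanCumulant M m else 0)
        (isPartition_of_mem_properIntervalPartitions π.2)

theorem booleanCumulant_apply
    (M : ∀ m : ℕ, MultilinearMap ℂ (fun _ : Fin (m + 1) => A) ℂ) (n : ℕ)
    (X : Fin (n + 1) → A) :
    booleanCumulant M n X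
      = M n X - ∑ π ∈ properIntervalPartitions n, cumPart (booleanCumulant M) X π := by
  rw [booleanCumulant, sub_apply, sum_apply,
    ← sum_properIntervalPartitions_congr
      (K := fun m => if _h : m < n then booleanCumulant M m else 0) n
      (fun m hm => dif_pos hm) X,
    ← Finset.sum_coe_sort (properIntervalPartitions n)]
  rfl

end Recursion

/-- Boolean moment–cumulant formula: for an algebraic probability space `(A, φ)` there is a
unique family of multilinear functionals `K_n^B : Aⁿ → ℂ` (`n ≥ 1`; here `K m` is the
`(m+1)`-linear one) such that `φ(X₁ ⋯ Xₙ) = Σ_{π ∈ I(n)} K_π^B(X₁, …, Xₙ)` for all `n ≥ 1`. -/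
theorem boolean_moment_cumulant_formula {A : Type*} [Ring A] [Algebra ℂ A]
    (φ : A →ₗ[ℂ] ℂ) (hφ : φ 1 = 1) :
    ∃! K : ∀ m : ℕ, MultilinearMap ℂ (fun _ : Fin (m + 1) => A) ℂ,
      ∀ (n : ℕ) (X : Fin (n + 1) → A),
        φ ((List.ofFn X).prod) =
          ∑ π ∈ Finset.univ.filter
              (fun π : Finset (Finset (Fin (n + 1))) => IsIntervalPartition π),
            cumPart K X π := by
  let M : ∀ m : ℕ, MultilinearMap ℂ (fun _ : Fin (m + 1) => A) ℂ := fun m =>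
    φ.compMultilinearMap (MultilinearMap.mkPiAlgebraFin ℂ (m + 1) A)
  have hM : ∀ n (X : Fin (n + 1) → A), M n X = φ ((List.ofFn X).prod) := fun n X => by
    simp [M]
  refine ⟨booleanCumulant M, fun n X => ?_, fun K hK => ?_⟩
  · rw [sum_cumPart_eq, booleanCumulant_apply, sub_add_cancel, hM]
  · funext n
    induction n using Nat.strong_induction_on with
    | _ n ih =>
      ext X
      rw [booleanCumulant_apply, hM, hK, sum_cumPart_eq,
        sum_properIntervalPartitions_congr n ih X, add_sub_cancel_right]
end
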